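/- Let K be a commutative ring, d ≥ 1, and for j = 0,…,d−1 let n_j be a natural number and A_j, D_j ∈ K^{n_j × n_{j+1 mod d}}. For tuples P = (P_0,…,P_{d−1}) with P_j ∈ 𝒫_{n_j} and Q = (Q_0,…,Q_{d−1}) with Q_j ∈ 𝒬_{n_j}, define the n_0 × n_0 matrix M(P,Q) = ∏_{j=0}^{d−1} ((Q_j P_j) A_j (Q_{j+1 mod d} P_{j+1 mod d})^{-1} + D_j). Then for every natural number k with k ≤ n_j for all j, ∑_{P,Q} [M(P,Q)]^{(k)} = (1+1)^{n_0+⋯+n_{d−1}} · ∑_{i=0}^{k} (∏_{j=0}^{d−1} (n_j−k+i)!·(n_j−i)!/(n_j−k)!) · [A_0⋯A_{d−1}]^{(i)} · [D_0⋯D_{d−1}]^{(k−i)}, where each quotient of factorials is a natural number cast into K. -/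

import Mathlib

/-- `[A]_{S,T}`: the determinant of the submatrix of `A` with rows indexed by `S` and
columns indexed by `T`, both taken in increasing order. -/
def minorDet {K : Type} [CommRing K] {m p : ℕ} (A : Matrix (Fin m) (Fin p) K)
    (S : Finset (Fin m)) (T : Finset (Fin p)) : K :=
  if h : T.card = S.card then (A.submatrix (S.orderEmbOfFin rfl) (T.orderEmbOfFin h)).det else 0

/-- Reindex the rows of a matrix along an equality of dimensions. -/
def rowCast {K : Type} [CommRing K] {a b p : ℕ} (h : a = b) (M : Matrix (Fin a) (Fin p) K) :
    Matrix (Fin b) (Fin p) K :=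
  M.submatrix (Fin.cast h.symm) id

/-- Reindex the columns of a matrix along an equality of dimensions. -/
def colCast {K : Type} [CommRing K] {m a b : ℕ} (h : a = b) (M : Matrix (Fin m) (Fin a) K) :
    Matrix (Fin m) (Fin b) K :=
  M.submatrix id (Fin.cast h.symm)

open Fin.NatCast Fin.CommRing in
/-- Partial products `A_0 * A_1 * ⋯ * A_{m-1}` of a cyclic family of matrices
`A j : Matrix (Fin (n j)) (Fin (n (j+1))) K` for `j : Fin d`. -/
def cycProdAux {K : Type} [CommRing K] {d : ℕ} [NeZero d] {n : Fin d → ℕ}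
    (A : ∀ j : Fin d, Matrix (Fin (n j)) (Fin (n (j + 1))) K) :
    (m : ℕ) → Matrix (Fin (n 0)) (Fin (n (m : Fin d))) K
  | 0 => colCast (congrArg n (by simp)) (1 : Matrix (Fin (n 0)) (Fin (n 0)) K)
  | m + 1 => colCast (congrArg n (by push_cast; ring))
      (cycProdAux A m * A ((m : ℕ) : Fin d))

/-- The cyclic product `A_0 * A_1 * ⋯ * A_{d-1}`, an `n 0 × n 0` matrix. -/
def cycProd {K : Type} [CommRing K] {d : ℕ} [NeZero d] {n : Fin d → ℕ}
    (A : ∀ j : Fin d, Matrix (Fin (n j)) (Fin (n (j + 1))) K) :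
    Matrix (Fin (n 0)) (Fin (n 0)) K :=
  colCast (congrArg n (by simp)) (cycProdAux A d)

/-- `[A]^{(k)}`: the sum of all principal `k × k` minors of `A`. -/
def minorSum {K : Type} [CommRing K] {m : ℕ} (A : Matrix (Fin m) (Fin m) K) (k : ℕ) : K :=
  ∑ S ∈ Finset.powersetCard k (Finset.univ : Finset (Fin m)), minorDet A S S

/-- The sign matrix (diagonal matrix with entries `±1`) determined by a choice of signs `ε`. -/
def signMatrix {m : ℕ} (K : Type) [CommRing K] (ε : Fin m → Bool) : Matrix (Fin m) (Fin m) K :=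
  Matrix.diagonal (fun i => if ε i then 1 else -1)

section PM
open Finset Matrix

variable {ι : Type} [Fintype ι] [DecidableEq ι] {R : Type} [CommRing R]

/-- Principal minor, as the determinant of the matrix whose rows outside `S` are replaced by
rows of the identity. -/
def prinMinor (M : Matrix ι ι R) (S : Finset ι) : R :=
  det (of fun x y => if x ∈ S then M x y else (1 : Matrix ι ι R) x y)

lemma det_add_rows (A B : Matrix ι ι R) :
    det (A + B) = ∑ U : Finset ι, det (of fun x y => if x ∈ U then A x y else B x y) := by
  have h := (detRowAlternating (n := ι) (R := R)).toMultilinearMap.map_add_univ A B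
  refine h.trans (Finset.sum_congr rfl fun U _ => ?_)
  change det _ = det _
  congr 1
  ext x y
  by_cases hx : x ∈ U <;> simp [Finset.piecewise, hx]

lemma det_one_add_eq (M : Matrix ι ι R) : det (1 + M) = ∑ S, prinMinor M S := by
  rw [add_comm, det_add_rows]; rfl

lemma prinMinor_eq_block (M : Matrix ι ι R) (S : Finset ι) :
    prinMinor M S =
      det (of fun x y => if x ∈ S then (if y ∈ S then M x y else 0) else (1 : Matrix ι ι R) x y) := by
  unfold prinMinor
  rw [det_apply, det_apply]
  refine Finset.sum_congr rfl fun σ _ => ?_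
  congr 1
  by_cases h : ∀ x, σ x ∉ S → σ x = x
  · refine Finset.prod_congr rfl fun x _ => ?_
    by_cases hx : σ x ∈ S
    · have : x ∈ S := by
        by_contra hxS
        have h1 : σ (σ.symm x) ∉ S := by simpa using hxS
        have h2 := h _ h1
        have h3 : σ x = x := by
          have : x = σ.symm x := by simpa using h2
          conv_lhs => rw [this]
          simp
        exact hxS (h3 ▸ hx)
      simp [hx, this]
    · simp [hx]
  · push Not at h
    obtain ⟨x, hx, hne⟩ := h
    rw [Finset.prod_eq_zero (Finset.mem_univ x), Finset.prod_eq_zero (Finset.mem_univ x)] <;>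
      simp [hx, hne]

lemma det_block_eq (A D : Matrix ι ι R) (U : Finset ι) :
    det (of fun x y => if x ∈ U then (if y ∈ U then A x y else 0)
      else (if y ∈ U then 0 else D x y)) = prinMinor A U * prinMinor D Uᶜ := by
  rw [prinMinor_eq_block, prinMinor_eq_block, ← det_mul]
  congr 1
  ext x y
  rw [mul_apply]
  by_cases hx : x ∈ U
  · have : ∀ z ∈ (univ : Finset ι), (of fun x y => if x ∈ U then (if y ∈ U then A x y else 0) else (1 : Matrix ι ι R) x y) x z *
      (of fun x y => if x ∈ Uᶜ then (if y ∈ Uᶜ then D x y else 0) else (1 : Matrix ι ι R) x y) z y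
       = (if z ∈ U then A x z else 0) * (1 : Matrix ι ι R) z y := by
      intro z _
      by_cases hz : z ∈ U <;> simp [hx, hz]
    rw [Finset.sum_congr rfl this, Finset.sum_eq_single y]
    · simp [hx]
    · intro z _ hz
      simp [hz]
    · simp
  · rw [Finset.sum_eq_single x]
    · simp [hx]
    · intro z _ hz
      simp [hx, Ne.symm hz]
    · simp

lemma sign_sum_det (A D : Matrix ι ι R) :
    ∑ ε : ι → Bool, det (of fun x y => (if ε x then 1 else -1) * A x y * (if ε y then 1 else -1)
      + D x y) = (1 + 1 : R) ^ Fintype.card ι * ∑ U : Finset ι, prinMinor A U * prinMinor D Uᶜ := by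
  have h0 : ∀ ε : ι → Bool, det (of fun x y => (if ε x then 1 else -1) * A x y * (if ε y then 1 else -1)
      + D x y) = ∑ U : Finset ι, det (of fun x y => if x ∈ U then
        (if ε x then 1 else -1) * A x y * (if ε y then 1 else -1) else D x y) := fun ε =>
    det_add_rows (of fun x y => (if ε x then 1 else -1) * A x y * (if ε y then 1 else -1)) D
  rw [Finset.sum_congr rfl fun ε _ => h0 ε, Finset.sum_comm, Finset.mul_sum]
  refine Finset.sum_congr rfl fun U _ => ?_
  rw [← det_block_eq]
  simp_rw [det_apply]
  rw [Finset.sum_comm, Finset.mul_sum]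
  refine Finset.sum_congr rfl fun σ _ => ?_
  rw [← Finset.smul_sum, mul_smul_comm]
  congr 1
  have h1 : ∀ ε : ι → Bool, (∏ x, (of fun x y => if x ∈ U then
        (if ε x then (1:R) else -1) * A x y * (if ε y then 1 else -1) else D x y) (σ x) x) =
      (∏ x, ((if x ∈ U then (if ε x then (1:R) else -1) else 1) *
        (if σ x ∈ U then (if ε x then (1:R) else -1) else 1))) *
      ∏ x, (if σ x ∈ U then A (σ x) x else D (σ x) x) := by
    intro ε
    rw [Finset.prod_mul_distrib, ← Equiv.prod_comp σ (fun x => if x ∈ U then (if ε x then (1:R) else -1) else 1),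
      ← Finset.prod_mul_distrib, ← Finset.prod_mul_distrib]
    refine Finset.prod_congr rfl fun x _ => ?_
    simp only [of_apply]
    by_cases hx : σ x ∈ U
    · simp only [hx, if_true]; ring
    · simp [hx]
  rw [Finset.sum_congr rfl fun ε _ => h1 ε, ← Finset.sum_mul]
  have h2 := Finset.prod_univ_sum (fun _ : ι => (univ : Finset Bool))
    (fun x b => ((if x ∈ U then (if b then (1:R) else -1) else 1) *
        (if σ x ∈ U then (if b then (1:R) else -1) else 1)))
  rw [Fintype.piFinset_univ] at h2
  rw [← h2, ← Finset.prod_mul_distrib, ← Finset.card_univ, ← Finset.prod_const, ← Finset.prod_mul_distrib]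
  refine Finset.prod_congr rfl fun x _ => ?_
  by_cases hx : x ∈ U <;> by_cases hy : σ x ∈ U <;> simp [hx, hy, one_add_one_eq_two]

lemma prinMinor_eq_zero_of_row {M : Matrix ι ι R} {S : Finset ι} {x : ι} (hx : x ∈ S)
    (h : ∀ y, M x y = 0) : prinMinor M S = 0 :=
  det_eq_zero_of_row_eq_zero x fun y => by simp [hx, h]

lemma sign_sum_prinMinor (A D : Matrix ι ι R) (S : Finset ι) :
    ∑ ε : ι → Bool, prinMinor (of fun x y => (if ε x then 1 else -1) * A x y * (if ε y then 1 else -1)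
      + D x y) S = (1 + 1 : R) ^ Fintype.card ι *
        ∑ U ∈ S.powerset, prinMinor A U * prinMinor D (S \ U) := by
  have h := sign_sum_det (of fun x y => if x ∈ S then A x y else 0)
    (of fun x y => if x ∈ S then D x y else (1 : Matrix ι ι R) x y)
  have e1 : ∀ ε : ι → Bool, prinMinor (of fun x y => (if ε x then 1 else -1) * A x y * (if ε y then 1 else -1)
      + D x y) S = det (of fun x y => (if ε x then 1 else -1) * (of fun x y => if x ∈ S then A x y else 0) x y * (if ε y then 1 else -1)
      + (of fun x y => if x ∈ S then D x y else (1 : Matrix ι ι R) x y) x y) := by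
    intro ε
    unfold prinMinor
    congr 1
    ext x y
    by_cases hx : x ∈ S <;> simp [hx]
  rw [Finset.sum_congr rfl fun ε _ => e1 ε, h]
  congr 1
  symm
  rw [← Finset.sum_subset (Finset.subset_univ S.powerset)]
  · refine Finset.sum_congr rfl fun U hU => ?_
    rw [Finset.mem_powerset] at hU
    congr 1
    · unfold prinMinor
      congr 1
      ext x y
      by_cases hx : x ∈ U
      · simp [hx, hU hx]
      · simp [hx]
    · unfold prinMinor
      congr 1
      ext x y
      by_cases hx : x ∈ U <;> by_cases hx' : x ∈ S <;> simp [hx, hx']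
  · intro U _ hU
    rw [Finset.mem_powerset, Finset.not_subset] at hU
    obtain ⟨x, hx, hxS⟩ := hU
    rw [prinMinor_eq_zero_of_row hx, zero_mul]
    simp [hxS]

lemma prinMinor_submatrix {κ : Type} [Fintype κ] [DecidableEq κ] (e : κ ≃ ι) (M : Matrix ι ι R)
    (U : Finset κ) : prinMinor (M.submatrix e e) U = prinMinor M (U.map e.toEmbedding) := by
  unfold prinMinor
  rw [← det_submatrix_equiv_self e]
  congr 1
  ext x y
  simp [one_apply]

lemma prinMinor_smul (a : R) (M : Matrix ι ι R) (S : Finset ι) :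
    prinMinor (a • M) S = a ^ S.card * prinMinor M S := by
  unfold prinMinor
  have := det_mul_column (fun x => if x ∈ S then a else 1) (of fun x y => if x ∈ S then M x y else (1 : Matrix ι ι R) x y)
  rw [Finset.prod_ite_mem, Finset.univ_inter, Finset.prod_const] at this
  rw [← this]
  congr 1
  ext x y
  by_cases hx : x ∈ S <;> simp [hx]

lemma prinMinor_map {R' : Type} [CommRing R'] (f : R →+* R') (M : Matrix ι ι R) (S : Finset ι) :
    prinMinor (M.map f) S = f (prinMinor M S) := by
  unfold prinMinor
  rw [RingHom.map_det]
  congr 1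
  ext x y
  by_cases hx : x ∈ S
  · simp [hx]
  · simp only [of_apply, hx, if_false, RingHom.mapMatrix_apply, map_apply, one_apply]
    split_ifs <;> simp

lemma minorDet_self_eq {m : ℕ} (A : Matrix (Fin m) (Fin m) R) (S : Finset (Fin m)) :
    minorDet A S S = prinMinor A S := by
  unfold minorDet
  rw [dif_pos rfl, prinMinor_eq_block, twoBlockTriangular_det (p := fun x => x ∈ S)]
  · have h2 : det (toSquareBlockProp (of fun x y => if x ∈ S then (if y ∈ S then A x y else 0)
      else (1 : Matrix (Fin m) (Fin m) R) x y) fun x => ¬ x ∈ S) = 1 := by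
      rw [← det_one (n := {x // ¬ x ∈ S})]
      congr 1
      ext ⟨x, hx⟩ ⟨y, hy⟩
      simp [toSquareBlockProp, hx, one_apply]
    rw [h2, mul_one]
    have h3 := det_submatrix_equiv_self (S.orderIsoOfFin rfl).toEquiv
      (of fun x y : S => A x.1 y.1)
    have h4 : (A.submatrix (S.orderEmbOfFin rfl) (S.orderEmbOfFin rfl)) =
      (of fun x y : S => A x.1 y.1).submatrix (S.orderIsoOfFin rfl).toEquiv
        (S.orderIsoOfFin rfl).toEquiv := by
      ext x y
      simp
    rw [h4, h3]
    have h5 : (toSquareBlockProp (of fun x y => if x ∈ S then (if y ∈ S then A x y else 0)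
      else (1 : Matrix (Fin m) (Fin m) R) x y) fun x => x ∈ S) = of fun x y => A x.1 y.1 := by
      ext x y
      simp [toSquareBlockProp]
    rw [h5]
    convert rfl
  · intro x hx y hy
    have : x ≠ y := fun h => hx (h ▸ hy)
    simp [hx, this]

end PM

section Colored
open Finset Matrix

variable {ι : Type} [Fintype ι] [DecidableEq ι] {R : Type} [CommRing R] {d : ℕ} [NeZero d]

lemma cyc_const (f : Fin d → ℕ) (h : ∀ j, f j ≤ f (j + 1)) (j : Fin d) : f j = f 0 := by
  have h1 : ∑ j, f j = ∑ j, f (j + 1) := (Equiv.sum_comp (Equiv.addRight (1 : Fin d)) f).symm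
  have h2 := (Finset.sum_eq_sum_iff_of_le (fun j _ => h j)).1 h1
  obtain ⟨m, hm⟩ := j
  induction m with
  | zero => rfl
  | succ m ih =>
    rw [← ih (by omega), h2 ⟨m, by omega⟩ (Finset.mem_univ _)]
    congr 1
    apply Fin.ext
    have : 1 % d = 1 := Nat.mod_eq_of_lt (by omega)
    simp [Fin.val_add, this, Nat.mod_eq_of_lt hm]

/-- `M` only has entries from colour `j` to colour `j + 1`. -/
def IsCyc (c : ι → Fin d) (M : Matrix ι ι R) : Prop := ∀ x y, M x y ≠ 0 → c y = c x + 1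

lemma prinMinor_color {c : ι → Fin d} {M : Matrix ι ι R} (hM : IsCyc c M) {U : Finset ι}
    (hU : prinMinor M U ≠ 0) (j : Fin d) :
    (U.filter fun x => c x = j).card = (U.filter fun x => c x = 0).card := by
  refine cyc_const (fun j => (U.filter fun x => c x = j).card) (fun j => ?_) j
  rw [prinMinor_eq_block, det_apply] at hU
  obtain ⟨σ, _, hσ⟩ := Finset.exists_ne_zero_of_sum_ne_zero hU
  have hσ' : (∏ x, (of fun x y => if x ∈ U then (if y ∈ U then M x y else 0)
      else (1 : Matrix ι ι R) x y) (σ x) x) ≠ 0 := fun h => hσ (by rw [h, smul_zero])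
  have hx : ∀ x, (of fun x y => if x ∈ U then (if y ∈ U then M x y else 0)
      else (1 : Matrix ι ι R) x y) (σ x) x ≠ 0 := fun x h =>
    hσ' (Finset.prod_eq_zero (Finset.mem_univ x) h)
  refine Finset.card_le_card_of_injOn σ.symm ?_ σ.symm.injective.injOn
  intro y hy
  have hy' : y ∈ U ∧ c y = j := by simpa using hy
  have h := hx (σ.symm y)
  rw [Equiv.apply_symm_apply] at h
  have h1 : σ.symm y ∈ U := by
    by_contra hn
    simp [hy'.1, hn] at h
  simp only [of_apply, hy'.1, h1, if_true] at h
  have := hM _ _ h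
  simp [h1, this, hy'.2]

lemma pow_color {c : ι → Fin d} {M : Matrix ι ι R} (hM : IsCyc c M) (m : ℕ) (x y : ι)
    (h : (M ^ m) x y ≠ 0) : (c y).val = ((c x).val + m) % d := by
  induction m generalizing y with
  | zero =>
    have : x = y := by
      by_contra hne
      simp [hne] at h
    subst this
    simp [Nat.mod_eq_of_lt (c x).isLt]
  | succ m ih =>
    rw [pow_succ, mul_apply] at h
    obtain ⟨z, _, hz⟩ := Finset.exists_ne_zero_of_sum_ne_zero h
    have h1 := ih z (left_ne_zero_of_mul hz)
    have h2 := hM _ _ (right_ne_zero_of_mul hz)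
    rw [h2, Fin.val_add, h1]
    rw [← add_assoc]
    simp

lemma det_one_sub_cyc {c : ι → Fin d} {M : Matrix ι ι R} (hM : IsCyc c M) :
    det (1 - M) = det (toSquareBlockProp (1 - M ^ d) fun x => c x = 0) := by
  have hd : 0 < d := Nat.pos_of_ne_zero (NeZero.ne d)
  have hM' : ∀ x y, M x y ≠ 0 → (c y).val = ((c x).val + 1) % d := fun x y h =>
    pow_color hM 1 x y (by simpa using h)
  set L : Matrix ι ι R := of fun x y =>
    if c x = 0 then (∑ m ∈ range d, M ^ m) x y else (1 : Matrix ι ι R) x y with hL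
  set N : Matrix ι ι R := of fun x y =>
    if c x = 0 then (1 - M ^ d) x y else (1 - M) x y with hN
  have hLN : L * (1 - M) = N := by
    ext x y
    by_cases hx : c x = 0
    · have : N x y = ((∑ m ∈ range d, M ^ m) * (1 - M)) x y := by
        rw [geom_sum_mul_neg]; simp [hN, hx]
      rw [this, mul_apply, mul_apply]
      simp [hL, hx]
    · have : N x y = ((1 : Matrix ι ι R) * (1 - M)) x y := by
        rw [one_mul]; simp [hN, hx]
      rw [this, mul_apply, mul_apply]
      simp [hL, hx]
  have hdL : det L = 1 := by
    rw [twoBlockTriangular_det L (fun x => c x = 0)]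
    · have e1 : toSquareBlockProp L (fun x => c x = 0) = 1 := by
        ext ⟨x, hx⟩ ⟨y, hy⟩
        have : (∑ m ∈ range d, M ^ m) x y = (M ^ 0) x y := by
          rw [Matrix.sum_apply]
          refine Finset.sum_eq_single 0 (fun m hm h0 => ?_) (by simp [hd.ne'])
          by_contra hne
          have := pow_color hM m x y hne
          rw [hx, hy] at this
          have hm' := Finset.mem_range.1 hm
          simp [Nat.mod_eq_of_lt hm'] at this
          exact h0 this.symm
        simp only [toSquareBlockProp, toBlock_apply, hL, of_apply, hx, if_true, this, pow_zero,
          one_apply, Subtype.mk.injEq]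
      have e2 : toSquareBlockProp L (fun x => ¬ c x = 0) = 1 := by
        ext ⟨x, hx⟩ ⟨y, hy⟩
        simp only [toSquareBlockProp, toBlock_apply, hL, of_apply, hx, if_false, one_apply,
          Subtype.mk.injEq]
      rw [e1, e2, det_one, det_one, one_mul]
    · intro x hx y hy
      have : x ≠ y := fun h => hx (h ▸ hy)
      simp [hL, hx, this]
  have hdN : det N = det (toSquareBlockProp (1 - M ^ d) fun x => c x = 0) := by
    rw [twoBlockTriangular_det' N (fun x => c x = 0)]
    · have e1 : toSquareBlockProp N (fun x => c x = 0) =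
        toSquareBlockProp (1 - M ^ d) (fun x => c x = 0) := by
        ext ⟨x, hx⟩ ⟨y, hy⟩
        simp only [toSquareBlockProp, toBlock_apply, hN, of_apply, hx, if_true]
      have e2 : det (toSquareBlockProp N (fun x => ¬ c x = 0)) = 1 := by
        have hbt : BlockTriangular (toSquareBlockProp N (fun x => ¬ c x = 0))
            (fun x => c x.1) := by
          rintro ⟨x, hx⟩ ⟨y, hy⟩ hlt
          have hlt' : c y < c x := hlt
          have hne : x ≠ y := fun h => by subst h; exact lt_irrefl _ hlt'
          have hz : M x y = 0 := by
            by_contra h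
            have h1 := hM' x y h
            have hy' : (c y).val ≠ 0 := fun h => hy (Fin.ext h)
            have hlt2 : (c y).val < (c x).val := hlt'
            rcases Nat.lt_or_ge ((c x).val + 1) d with h3 | h3
            · rw [Nat.mod_eq_of_lt h3] at h1; omega
            · have : (c x).val + 1 = d := by have := (c x).isLt; omega
              rw [this, Nat.mod_self] at h1; omega
          simp [toSquareBlockProp, hN, hx, hne, hz]
        rw [hbt.det_fintype]
        refine Finset.prod_eq_one fun k _ => ?_
        rw [← det_one (n := {a : {x // ¬ c x = 0} // c a.1 = k})]
        congr 1
        ext ⟨⟨x, hx⟩, hxk⟩ ⟨⟨y, hy⟩, hyk⟩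
        have hxk' : c x = k := hxk
        have hyk' : c y = k := hyk
        have hz : M x y = 0 := by
          by_contra h
          have h1 := hM' x y h
          have hy' : (c y).val ≠ 0 := fun h => hy (Fin.ext h)
          have hlt2 : (c y).val = (c x).val := by rw [hxk', hyk']
          rcases Nat.lt_or_ge ((c x).val + 1) d with h3 | h3
          · rw [Nat.mod_eq_of_lt h3] at h1; omega
          · have : (c x).val + 1 = d := by have := (c x).isLt; omega
            rw [this, Nat.mod_self] at h1; omega
        simp [toSquareBlock, toSquareBlockProp, hN, hx, hz, one_apply]
      rw [e1, e2, mul_one]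
    · intro x hx y hy
      have hne : x ≠ y := fun h => hy (h ▸ hx)
      have hz : (M ^ d) x y = 0 := by
        by_contra h
        have := pow_color hM d x y h
        rw [hx] at this
        simp at this
        exact hy this
      simp [hN, hx, hne, hz]
  rw [← hdN, ← hLN, det_mul, hdL, one_mul]

/-- The sets having exactly `k` elements of every colour. -/
def colSets (c : ι → Fin d) (k : ℕ) : Finset (Finset ι) :=
  univ.filter fun U => ∀ j, (U.filter fun x => c x = j).card = k

lemma card_of_mem_colSets {c : ι → Fin d} {k : ℕ} {U : Finset ι} (h : U ∈ colSets c k) :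
    U.card = d * k := by
  have h' : ∀ j, (U.filter fun x => c x = j).card = k := by simpa [colSets] using h
  rw [Finset.card_eq_sum_card_fiberwise (f := c) (t := univ) (fun _ _ => by simp)]
  rw [Finset.sum_congr rfl fun j _ => h' j]
  simp

lemma exists_colSets {c : ι → Fin d} {M : Matrix ι ι R} (hM : IsCyc c M) {U : Finset ι}
    (hU : prinMinor M U ≠ 0) : ∃ i, U ∈ colSets c i :=
  ⟨_, by simpa [colSets] using prinMinor_color hM hU⟩

lemma colSets_inj {c : ι → Fin d} {k l : ℕ} {U : Finset ι} (h : U ∈ colSets c k)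
    (h' : U ∈ colSets c l) : k = l := by
  have hd : 0 < d := Nat.pos_of_ne_zero (NeZero.ne d)
  have := (card_of_mem_colSets h).symm.trans (card_of_mem_colSets h')
  exact Nat.eq_of_mul_eq_mul_left hd this

open Polynomial in
lemma det_one_sub_poly (r : ℕ) (M : Matrix ι ι R) (m : ℕ) (hr : 0 < r) :
    (det (1 - (X : R[X]) ^ r • M.map (C : R →+* R[X]))).coeff (r * m) =
      (-1) ^ m * ∑ S ∈ powersetCard m univ, prinMinor M S := by
  have : (1 - (X : R[X]) ^ r • M.map (C : R →+* R[X])) =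
    1 + (C (-1) * X ^ r : R[X]) • M.map (C : R →+* R[X]) := by
    rw [sub_eq_add_neg]; congr 1; simp
  rw [this, det_one_add_eq, finsetSum_coeff, Finset.mul_sum, ← Finset.sum_filter_add_sum_filter_not univ (fun S : Finset ι => S.card = m)]
  rw [Finset.sum_eq_zero (s := univ.filter fun S : Finset ι => ¬ S.card = m), add_zero]
  · refine Finset.sum_congr (by ext; simp [Finset.mem_powersetCard]) fun S hS => ?_
    have hS' : S.card = m := by simpa [Finset.mem_powersetCard] using hS
    rw [prinMinor_smul, prinMinor_map, mul_pow, ← pow_mul, ← C_pow, mul_assoc, coeff_C_mul,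
      coeff_mul_C, coeff_X_pow, hS', if_pos rfl, one_mul]
  · intro S hS
    have hS' : S.card ≠ m := by simpa using hS
    rw [prinMinor_smul, prinMinor_map, mul_pow, ← pow_mul, ← C_pow, mul_assoc, coeff_C_mul,
      coeff_mul_C, coeff_X_pow, if_neg, zero_mul, mul_zero]
    intro h
    exact hS' (Nat.eq_of_mul_eq_mul_left hr h).symm

open Polynomial in
lemma cyc_minors {c : ι → Fin d} {M : Matrix ι ι R} (hM : IsCyc c M) {κ : Type} [Fintype κ]
    [DecidableEq κ] (e : κ ≃ {x // c x = 0}) (k : ℕ) :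
    ∑ S ∈ powersetCard k univ, prinMinor ((M ^ d).submatrix (fun a => (e a).1) (fun a => (e a).1)) S
      = (-1) ^ k * (-1) ^ (d * k) * ∑ U ∈ colSets c k, prinMinor M U := by
  have hd : 0 < d := Nat.pos_of_ne_zero (NeZero.ne d)
  have h1 := det_one_sub_poly d ((M ^ d).submatrix (fun a => (e a).1) (fun a => (e a).1)) k hd
  have h2 := det_one_sub_poly 1 M (d * k) one_pos
  have hcyc : IsCyc c ((X : R[X]) • M.map (C : R →+* R[X])) := by
    intro x y h
    refine hM x y fun h0 => h ?_
    simp [h0]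
  have h3 := det_one_sub_cyc hcyc
  have h4 : det (toSquareBlockProp (1 - ((X : R[X]) • M.map (C : R →+* R[X])) ^ d) fun x => c x = 0)
    = det (1 - (X : R[X]) ^ d • ((M ^ d).submatrix (fun a => (e a).1) (fun a => (e a).1)).map (C : R →+* R[X])) := by
    rw [← det_submatrix_equiv_self e]
    congr 1
    ext1 a b
    have : (M.map (C : R →+* R[X])) ^ d = (M ^ d).map (C : R →+* R[X]) := by
      rw [← RingHom.mapMatrix_apply, ← RingHom.mapMatrix_apply, map_pow]
    rw [_root_.smul_pow, this]
    simp [toSquareBlockProp, one_apply, Subtype.ext_iff.symm]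
  rw [pow_one, one_mul, h3, h4, h1] at h2
  have h5 : ∑ S ∈ powersetCard (d * k) univ, prinMinor M S = ∑ U ∈ colSets c k, prinMinor M U := by
    symm
    apply Finset.sum_subset
    · intro U hU
      simp [Finset.mem_powersetCard, card_of_mem_colSets hU]
    · intro U hU hU'
      by_contra hne
      obtain ⟨i, hi⟩ := exists_colSets hM hne
      have := card_of_mem_colSets hi
      rw [(Finset.mem_powersetCard.1 hU).2] at this
      exact hU' ((Nat.eq_of_mul_eq_mul_left hd this) ▸ hi)
  rw [h5] at h2
  rw [mul_assoc, ← h2, ← mul_assoc, ← pow_add, ← two_mul, pow_mul]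
  simp

end Colored

section Big
open Finset Matrix

variable {K : Type} [CommRing K] {d : ℕ} [NeZero d] {n : Fin d → ℕ}

/-- The cyclic block matrix with blocks `M j` at position `(j, j + 1)`. -/
def bigM (M : ∀ j : Fin d, Matrix (Fin (n j)) (Fin (n (j + 1))) K) :
    Matrix (Σ j : Fin d, Fin (n j)) (Σ j : Fin d, Fin (n j)) K :=
  of fun x y => if h : y.1 = x.1 + 1 then M x.1 x.2 (Fin.cast (congrArg n h) y.2) else 0

lemma isCyc_bigM (M : ∀ j : Fin d, Matrix (Fin (n j)) (Fin (n (j + 1))) K) :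
    IsCyc (fun x : Σ j : Fin d, Fin (n j) => x.1) (bigM M) := by
  intro x y h
  by_contra hne
  exact h (dif_neg hne)

open Fin.NatCast Fin.CommRing in
lemma bigM_pow (M : ∀ j : Fin d, Matrix (Fin (n j)) (Fin (n (j + 1))) K) (m : ℕ)
    (x : Fin (n 0)) (y : Σ j : Fin d, Fin (n j)) :
    (bigM M ^ m) ⟨0, x⟩ y =
      if h : y.1 = (m : Fin d) then cycProdAux M m x (Fin.cast (congrArg n h) y.2) else 0 := by
  induction m generalizing y with
  | zero =>
    obtain ⟨j, y⟩ := y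
    by_cases h : j = 0
    · subst h
      simp [cycProdAux, colCast, one_apply, Fin.ext_iff]
    · have h' : (0 : Fin d) ≠ j := fun e => h e.symm
      simp [h, h']
  | succ m ih =>
    rw [pow_succ, mul_apply, Fintype.sum_sigma, Finset.sum_eq_single ((m : ℕ) : Fin d)]
    · by_cases h : y.1 = ((m + 1 : ℕ) : Fin d)
      · have h' : y.1 = (m : Fin d) + 1 := by rw [h]; push_cast; rfl
        rw [dif_pos h]
        simp only [cycProdAux, colCast, submatrix_apply, mul_apply, id]
        refine Finset.sum_congr rfl fun z _ => ?_
        rw [ih]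
        simp [bigM, h']
      · have h' : ¬ y.1 = (m : Fin d) + 1 := fun e => h (by rw [e]; push_cast; rfl)
        rw [dif_neg h]
        refine Finset.sum_eq_zero fun z _ => ?_
        simp [bigM, h']
    · intro j _ hj
      refine Finset.sum_eq_zero fun z _ => ?_
      rw [ih]
      simp [hj]
    · simp

lemma cycProd_apply (M : ∀ j : Fin d, Matrix (Fin (n j)) (Fin (n (j + 1))) K)
    (x y : Fin (n 0)) : cycProd M x y = (bigM M ^ d) ⟨0, x⟩ ⟨0, y⟩ := by
  rw [bigM_pow]
  simp [cycProd, colCast]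

/-- The colour class of `0`. -/
def zeroEquiv (n : Fin d → ℕ) : Fin (n 0) ≃ {x : Σ j : Fin d, Fin (n j) // x.1 = 0} where
  toFun a := ⟨⟨0, a⟩, rfl⟩
  invFun x := Fin.cast (congrArg n x.2) x.1.2
  left_inv a := rfl
  right_inv := by rintro ⟨⟨j, a⟩, h⟩; dsimp at h; subst h; rfl

lemma minorSum_cycProd (M : ∀ j : Fin d, Matrix (Fin (n j)) (Fin (n (j + 1))) K) (k : ℕ) :
    minorSum (cycProd M) k = (-1) ^ k * (-1) ^ (d * k) *
      ∑ U ∈ colSets (fun x : Σ j : Fin d, Fin (n j) => x.1) k, prinMinor (bigM M) U := by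
  rw [← cyc_minors (isCyc_bigM M) (zeroEquiv n)]
  unfold minorSum
  refine Finset.sum_congr rfl fun S _ => ?_
  rw [minorDet_self_eq]
  congr 1
  ext x y
  rw [cycProd_apply]; rfl

lemma signPerm_inv {m : ℕ} (ε : Fin m → Bool) (π : Equiv.Perm (Fin m)) :
    (signMatrix K ε * π.permMatrix K)⁻¹ = (π⁻¹).permMatrix K * signMatrix K ε := by
  apply inv_eq_right_inv
  have h1 : π.permMatrix K * (π⁻¹).permMatrix K = 1 := by
    rw [← permMatrix_mul]; simp
  have h2 : signMatrix K ε * signMatrix K ε = 1 := by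
    unfold signMatrix
    rw [diagonal_mul_diagonal, ← diagonal_one]
    congr 1
    ext i
    split_ifs <;> simp
  rw [mul_assoc, ← mul_assoc (π.permMatrix K), h1, one_mul, h2]

lemma conj_apply {a b : ℕ} (ε : Fin a → Bool) (π : Equiv.Perm (Fin a)) (ε' : Fin b → Bool)
    (π' : Equiv.Perm (Fin b)) (A : Matrix (Fin a) (Fin b) K) (x : Fin a) (y : Fin b) :
    (signMatrix K ε * π.permMatrix K * A * (signMatrix K ε' * π'.permMatrix K)⁻¹) x y =
      (if ε x then 1 else -1) * A (π x) (π' y) * (if ε' y then 1 else -1) := by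
  rw [signPerm_inv, ← Matrix.mul_assoc]
  unfold signMatrix
  rw [mul_diagonal, Matrix.mul_assoc, Matrix.mul_assoc, diagonal_mul]
  simp only [Equiv.Perm.permMatrix]
  rw [PEquiv.toMatrix_toPEquiv_mul, PEquiv.mul_toMatrix_toPEquiv]
  rfl

lemma bigM_conj (A D : ∀ j : Fin d, Matrix (Fin (n j)) (Fin (n (j + 1))) K)
    (ε : ∀ j : Fin d, Fin (n j) → Bool) (π : ∀ j : Fin d, Equiv.Perm (Fin (n j))) :
    bigM (fun j => (signMatrix K (ε j) * (π j).permMatrix K) * A j *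
              (signMatrix K (ε (j + 1)) * (π (j + 1)).permMatrix K)⁻¹ + D j) =
    of fun x y => (if ε x.1 x.2 then 1 else -1) *
      ((bigM A).submatrix (Equiv.sigmaCongrRight π) (Equiv.sigmaCongrRight π)) x y *
      (if ε y.1 y.2 then 1 else -1) + bigM D x y := by
  ext ⟨j, x⟩ ⟨j', y⟩
  by_cases h : j' = j + 1
  · subst h
    simp [bigM, conj_apply]
  · simp [bigM, h]

end Big

section Count
open Finset

lemma count_invariant {α : Type} [Fintype α] [DecidableEq α] (V W W' : Finset α)
    (h : W.card = W'.card) :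
    (univ.filter fun σ : Equiv.Perm α => ∀ x ∈ W, σ x ∉ V).card =
      (univ.filter fun σ : Equiv.Perm α => ∀ x ∈ W', σ x ∉ V).card := by
  have e : {x // x ∈ W} ≃ {x // x ∈ W'} := Finset.equivOfCardEq h
  set τ : Equiv.Perm α := e.extendSubtype with hτ
  have h1 : ∀ x, τ x ∈ W' ↔ x ∈ W := by
    intro x
    constructor
    · intro hx
      by_contra hn
      exact e.extendSubtype_not_mem x hn hx
    · exact fun hx => e.extendSubtype_mem x hx
  refine Finset.card_bij' (fun σ _ => σ * τ⁻¹) (fun σ _ => σ * τ) ?_ ?_ ?_ ?_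
  · intro σ hσ
    have hσ' : ∀ x ∈ W, σ x ∉ V := by simpa using hσ
    simp only [mem_filter, mem_univ, true_and, Equiv.Perm.mul_apply]
    intro x hx
    exact hσ' _ ((h1 _).1 (by simpa using hx))
  · intro σ hσ
    have hσ' : ∀ x ∈ W', σ x ∉ V := by simpa using hσ
    simp only [mem_filter, mem_univ, true_and, Equiv.Perm.mul_apply]
    intro x hx
    exact hσ' _ ((h1 _).2 hx)
  · intro σ _; simp
  · intro σ _; simp

lemma count_mul {α : Type} [Fintype α] [DecidableEq α] (V W : Finset α) :
    (Fintype.card α).choose W.card *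
      (univ.filter fun σ : Equiv.Perm α => ∀ x ∈ W, σ x ∉ V).card =
      (Fintype.card α).factorial * (Fintype.card α - V.card).choose W.card := by
  have h1 : ∑ W' ∈ powersetCard W.card (univ : Finset α),
      (univ.filter fun σ : Equiv.Perm α => ∀ x ∈ W', σ x ∉ V).card =
      (Fintype.card α).choose W.card *
      (univ.filter fun σ : Equiv.Perm α => ∀ x ∈ W, σ x ∉ V).card := by
    rw [Finset.sum_congr rfl fun W' hW' => count_invariant V W' W (Finset.mem_powersetCard.1 hW').2]
    simp
  rw [← h1]
  have h2 := Finset.sum_card_bipartiteAbove_eq_sum_card_bipartiteBelow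
    (s := powersetCard W.card (univ : Finset α)) (t := (univ : Finset (Equiv.Perm α)))
    (fun W' σ => ∀ x ∈ W', σ x ∉ V)
  simp only [bipartiteAbove, bipartiteBelow] at h2
  rw [h2]
  have h3 : ∀ σ : Equiv.Perm α, ((powersetCard W.card (univ : Finset α)).filter
      fun W' => ∀ x ∈ W', σ x ∉ V).card = (Fintype.card α - V.card).choose W.card := by
    intro σ
    have : ((powersetCard W.card (univ : Finset α)).filter fun W' => ∀ x ∈ W', σ x ∉ V) =
      powersetCard W.card (Vᶜ.map σ.symm.toEmbedding) := by
      ext W'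
      simp only [mem_filter, mem_powersetCard, Finset.subset_iff, mem_univ, implies_true, true_and,
        mem_map_equiv, mem_compl, Equiv.symm_symm]
      tauto
    rw [this, card_powersetCard, card_map, card_compl]
  rw [Finset.sum_congr rfl fun σ _ => h3 σ]
  simp [Fintype.card_perm]

lemma count_eq {α : Type} [Fintype α] [DecidableEq α] (V W : Finset α) (k i : ℕ)
    (hk : k ≤ Fintype.card α) (hi : i ≤ k) (hV : V.card = i) (hW : W.card = k - i) :
    (univ.filter fun σ : Equiv.Perm α => ∀ x ∈ W, σ x ∉ V).card =
      (Fintype.card α - k + i).factorial * (Fintype.card α - i).factorial /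
        (Fintype.card α - k).factorial := by
  have h := count_mul V W
  rw [hV, hW] at h
  set N := Fintype.card α
  set c := (univ.filter fun σ : Equiv.Perm α => ∀ x ∈ W, σ x ∉ V).card
  have h1 := Nat.choose_mul_factorial_mul_factorial (n := N) (k := k - i) (by omega)
  have h2 := Nat.choose_mul_factorial_mul_factorial (n := N - i) (k := k - i) (by omega)
  rw [show N - (k - i) = N - k + i by omega] at h1
  rw [show N - i - (k - i) = N - k by omega] at h2
  symm
  apply Nat.div_eq_of_eq_mul_left (Nat.factorial_pos _)
  apply Nat.eq_of_mul_eq_mul_left (Nat.factorial_pos N)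
  calc N.factorial * ((N - k + i).factorial * (N - i).factorial)
      = (N.factorial * (N - i).choose (k - i)) * ((k - i).factorial * (N - k).factorial *
          (N - k + i).factorial) := by rw [← h2]; ring
    _ = (N.choose (k - i) * (k - i).factorial * (N - k + i).factorial) * (c * (N - k).factorial) := by
        rw [← h]; ring
    _ = _ := by rw [h1]

lemma count_sigma {d : ℕ} {n : Fin d → ℕ} (V W : Finset (Σ j : Fin d, Fin (n j))) (k i : ℕ)
    (hk : ∀ j, k ≤ n j) (hi : i ≤ k)
    (hV : V ∈ colSets (fun x : Σ j : Fin d, Fin (n j) => x.1) i)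
    (hW : W ∈ colSets (fun x : Σ j : Fin d, Fin (n j) => x.1) (k - i)) :
    (univ.filter fun π : (∀ j : Fin d, Equiv.Perm (Fin (n j))) =>
      ∀ x ∈ W, Equiv.sigmaCongrRight π x ∉ V).card =
    ∏ j, ((n j - k + i).factorial * (n j - i).factorial / (n j - k).factorial) := by
  have key : ∀ (Z : Finset (Σ j : Fin d, Fin (n j))) (l : ℕ),
      Z ∈ colSets (fun x : Σ j : Fin d, Fin (n j) => x.1) l → ∀ j,
      (univ.filter fun x : Fin (n j) => (⟨j, x⟩ : Σ j : Fin d, Fin (n j)) ∈ Z).card = l := by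
    intro Z l hZ j
    have hZ' : ∀ j, (Z.filter fun x => x.1 = j).card = l := by simpa [colSets] using hZ
    rw [← hZ' j]
    refine (Finset.card_map (Function.Embedding.sigmaMk (β := fun j => Fin (n j)) j)).symm.trans ?_
    congr 1
    ext ⟨j', x⟩
    simp only [mem_map, mem_filter, mem_univ, true_and, Function.Embedding.sigmaMk_apply]
    constructor
    · rintro ⟨a, ha, h⟩
      have h' : j' = j := (congrArg Sigma.fst h).symm
      exact ⟨h ▸ ha, h'⟩
    · rintro ⟨h, h'⟩
      subst h'
      exact ⟨x, h, rfl⟩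
  have : (univ.filter fun π : (∀ j : Fin d, Equiv.Perm (Fin (n j))) =>
      ∀ x ∈ W, Equiv.sigmaCongrRight π x ∉ V) =
    Fintype.piFinset fun j => univ.filter fun σ : Equiv.Perm (Fin (n j)) =>
      ∀ x ∈ (univ.filter fun x : Fin (n j) => (⟨j, x⟩ : Σ j : Fin d, Fin (n j)) ∈ W),
        σ x ∉ (univ.filter fun x : Fin (n j) => (⟨j, x⟩ : Σ j : Fin d, Fin (n j)) ∈ V) := by
    ext π
    simp only [mem_filter, mem_univ, true_and, Fintype.mem_piFinset, Sigma.forall,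
      Equiv.sigmaCongrRight_apply]
  rw [this, Fintype.card_piFinset]
  refine Finset.prod_congr rfl fun j _ => ?_
  have h := count_eq _ _ k i (by simpa using hk j) hi (key V i hV j) (key W _ hW j)
  rw [Fintype.card_fin] at h
  rw [← h]
  convert rfl

lemma colSets_split {ι : Type} [Fintype ι] [DecidableEq ι] {K : Type} [CommRing K] {d : ℕ}
    [NeZero d] (c : ι → Fin d) (f g : Finset ι → K) (hf : ∀ U, f U ≠ 0 → ∃ i, U ∈ colSets c i)
    (k : ℕ) :
    ∑ S ∈ colSets c k, ∑ U ∈ S.powerset, f U * g (S \ U) =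
      ∑ i ∈ range (k + 1), ∑ U ∈ colSets c i, ∑ W ∈ colSets c (k - i),
        if Disjoint U W then f U * g W else 0 := by
  have hcard : ∀ U W : Finset ι, Disjoint U W → ∀ j, ((U ∪ W).filter fun x => c x = j).card =
      (U.filter fun x => c x = j).card + (W.filter fun x => c x = j).card := by
    intro U W h j
    rw [Finset.filter_union, Finset.card_union_of_disjoint (Finset.disjoint_filter_filter h)]
  rw [Finset.sum_comm' (s' := fun U => (colSets c k).filter fun S => U ⊆ S) (t' := univ)
    (by intro S U; simp)]
  rw [Finset.sum_comm' (s' := fun U => (range (k + 1)).filter fun i => U ∈ colSets c i) (t' := univ)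
    (by intro i U; simp)]
  refine Finset.sum_congr rfl fun U _ => ?_
  by_cases hU : f U = 0
  · simp [hU]
  obtain ⟨i, hi⟩ := hf U hU
  have hi' : ∀ j, (U.filter fun x => c x = j).card = i := by simpa [colSets] using hi
  by_cases hik : i ≤ k
  · have : ((range (k + 1)).filter fun i => U ∈ colSets c i) = {i} := by
      ext l
      simp only [mem_filter, mem_range, mem_singleton]
      constructor
      · rintro ⟨_, h⟩; exact colSets_inj h hi
      · rintro rfl; exact ⟨by omega, hi⟩
    rw [this, Finset.sum_singleton, ← Finset.sum_filter]
    refine Finset.sum_nbij' (fun S => S \ U) (fun W => U ∪ W) ?_ ?_ ?_ ?_ ?_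
    · intro S hS
      obtain ⟨hS, hUS⟩ := Finset.mem_filter.1 hS
      have hS' : ∀ j, (S.filter fun x => c x = j).card = k := by simpa [colSets] using hS
      refine Finset.mem_filter.2 ⟨?_, Finset.disjoint_sdiff⟩
      simp only [colSets, mem_filter, mem_univ, true_and]
      intro j
      have := hcard U (S \ U) Finset.disjoint_sdiff j
      rw [Finset.union_sdiff_of_subset hUS, hS', hi'] at this
      omega
    · intro W hW
      obtain ⟨hW, hUW⟩ := Finset.mem_filter.1 hW
      have hW' : ∀ j, (W.filter fun x => c x = j).card = k - i := by simpa [colSets] using hW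
      refine Finset.mem_filter.2 ⟨?_, Finset.subset_union_left⟩
      simp only [colSets, mem_filter, mem_univ, true_and]
      intro j
      rw [hcard U W hUW j, hW', hi']
      omega
    · intro S hS
      exact Finset.union_sdiff_of_subset (Finset.mem_filter.1 hS).2
    · intro W hW
      exact Finset.union_sdiff_cancel_left (Finset.mem_filter.1 hW).2
    · intro S hS
      rfl
  · rw [Finset.sum_eq_zero, Finset.sum_eq_zero]
    · intro l hl
      obtain ⟨h1, h2⟩ := Finset.mem_filter.1 hl
      have := colSets_inj h2 hi
      have := Finset.mem_range.1 h1
      omega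
    · intro S hS
      obtain ⟨hS, hUS⟩ := Finset.mem_filter.1 hS
      have hS' : ∀ j, (S.filter fun x => c x = j).card = k := by simpa [colSets] using hS
      have h3 := Finset.card_le_card (Finset.filter_subset_filter (fun x => c x = 0) hUS)
      rw [hS', hi'] at h3
      omega

end Count

section Final
open Finset Matrix

lemma sign_sum_sigma {K : Type} [CommRing K] {d : ℕ} {n : Fin d → ℕ}
    (F : ((Σ j : Fin d, Fin (n j)) → Bool) → K) :
    ∑ ε : (∀ j : Fin d, Fin (n j) → Bool), F (fun x => ε x.1 x.2) = ∑ ε, F ε :=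
  Equiv.sum_comp (Equiv.piCurry (fun (j : Fin d) (_ : Fin (n j)) => Bool)).symm F

lemma map_mem_colSets {d : ℕ} {n : Fin d → ℕ} (π : ∀ j : Fin d, Equiv.Perm (Fin (n j)))
    {i : ℕ} {U : Finset (Σ j : Fin d, Fin (n j))}
    (hU : U ∈ colSets (fun x : Σ j : Fin d, Fin (n j) => x.1) i) :
    U.map (Equiv.sigmaCongrRight π).toEmbedding ∈
      colSets (fun x : Σ j : Fin d, Fin (n j) => x.1) i := by
  simp only [colSets, mem_filter, mem_univ, true_and] at hU ⊢
  intro j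
  rw [← hU j, Finset.filter_map, Finset.card_map]
  rfl

lemma perm_sum {K : Type} [CommRing K] {d : ℕ} [NeZero d] {n : Fin d → ℕ}
    (f g : Finset (Σ j : Fin d, Fin (n j)) → K) (k i : ℕ) (hk : ∀ j, k ≤ n j) (hi : i ≤ k) :
    ∑ π : (∀ j : Fin d, Equiv.Perm (Fin (n j))),
      ∑ U ∈ colSets (fun x : Σ j : Fin d, Fin (n j) => x.1) i,
      ∑ W ∈ colSets (fun x : Σ j : Fin d, Fin (n j) => x.1) (k - i),
        (if Disjoint U W then f (U.map (Equiv.sigmaCongrRight π).toEmbedding) * g W else 0) =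
    (∏ j : Fin d,
      (((n j - k + i).factorial * (n j - i).factorial / (n j - k).factorial : ℕ) : K)) *
      ((∑ V ∈ colSets (fun x : Σ j : Fin d, Fin (n j) => x.1) i, f V) *
       ∑ W ∈ colSets (fun x : Σ j : Fin d, Fin (n j) => x.1) (k - i), g W) := by
  have h1 : ∀ π : (∀ j : Fin d, Equiv.Perm (Fin (n j))),
      ∑ U ∈ colSets (fun x : Σ j : Fin d, Fin (n j) => x.1) i,
      ∑ W ∈ colSets (fun x : Σ j : Fin d, Fin (n j) => x.1) (k - i),
        (if Disjoint U W then f (U.map (Equiv.sigmaCongrRight π).toEmbedding) * g W else 0) =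
      ∑ V ∈ colSets (fun x : Σ j : Fin d, Fin (n j) => x.1) i,
      ∑ W ∈ colSets (fun x : Σ j : Fin d, Fin (n j) => x.1) (k - i),
        (if ∀ x ∈ W, Equiv.sigmaCongrRight π x ∉ V then f V * g W else 0) := by
    intro π
    refine Finset.sum_nbij' (fun U => U.map (Equiv.sigmaCongrRight π).toEmbedding)
      (fun V => V.map (Equiv.sigmaCongrRight fun j => (π j).symm).toEmbedding)
      (fun U hU => map_mem_colSets π hU) (fun U hU => map_mem_colSets _ hU) ?_ ?_ ?_
    · intro U _
      ext ⟨j, x⟩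
      simp [Equiv.sigmaCongrRight]
    · intro U _
      ext ⟨j, x⟩
      simp [Equiv.sigmaCongrRight]
    · intro U _
      refine Finset.sum_congr rfl fun W _ => if_congr ?_ rfl rfl
      rw [disjoint_comm, Finset.disjoint_left]
      simp only [Finset.mem_map_equiv, Equiv.symm_apply_apply]
  rw [Finset.sum_congr rfl fun π _ => h1 π, Finset.sum_comm, Finset.sum_mul_sum, Finset.mul_sum]
  refine Finset.sum_congr rfl fun V hV => ?_
  rw [Finset.sum_comm, Finset.mul_sum]
  refine Finset.sum_congr rfl fun W hW => ?_
  rw [← Finset.sum_filter, Finset.sum_const, count_sigma V W k i hk hi hV hW, nsmul_eq_mul]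
  push_cast
  rfl

end Final

theorem stmt_9 {K : Type} [CommRing K] (d : ℕ) [NeZero d] (n : Fin d → ℕ)
    (A D : ∀ j : Fin d, Matrix (Fin (n j)) (Fin (n (j + 1))) K)
    (k : ℕ) (hk : ∀ j, k ≤ n j) :
    ∑ ε : (∀ j : Fin d, Fin (n j) → Bool),
      ∑ π : (∀ j : Fin d, Equiv.Perm (Fin (n j))),
        minorSum (cycProd (fun j =>
          (signMatrix K (ε j) * (π j).permMatrix K) * A j *
              (signMatrix K (ε (j + 1)) * (π (j + 1)).permMatrix K)⁻¹ + D j)) k =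
      (1 + 1 : K) ^ (∑ j : Fin d, n j) *
        ∑ i ∈ Finset.range (k + 1),
          (∏ j : Fin d,
            (((n j - k + i).factorial * (n j - i).factorial / (n j - k).factorial : ℕ) : K)) *
            minorSum (cycProd A) i * minorSum (cycProd D) (k - i) := by
  have hd := NeZero.ne d
  have h0 : ∀ (ε : ∀ j : Fin d, Fin (n j) → Bool) (π : ∀ j : Fin d, Equiv.Perm (Fin (n j))), _ :=
    fun ε π => minorSum_cycProd (fun j =>
          (signMatrix K (ε j) * (π j).permMatrix K) * A j *
              (signMatrix K (ε (j + 1)) * (π (j + 1)).permMatrix K)⁻¹ + D j) k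
  simp_rw [bigM_conj] at h0
  rw [Finset.sum_congr rfl fun ε _ => Finset.sum_congr rfl fun π _ => h0 ε π]
  simp_rw [← Finset.mul_sum]
  rw [Finset.sum_comm]
  have h1 : ∀ π : (∀ j : Fin d, Equiv.Perm (Fin (n j))),
      ∑ ε : (∀ j : Fin d, Fin (n j) → Bool),
        ∑ S ∈ colSets (fun x : Σ j : Fin d, Fin (n j) => x.1) k,
          prinMinor (Matrix.of fun x y => (if ε x.1 x.2 then 1 else -1) *
            ((bigM A).submatrix (Equiv.sigmaCongrRight π) (Equiv.sigmaCongrRight π)) x y *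
            (if ε y.1 y.2 then 1 else -1) + bigM D x y) S =
      (1 + 1 : K) ^ (∑ j : Fin d, n j) *
        ∑ i ∈ Finset.range (k + 1), 
          ∑ U ∈ colSets (fun x : Σ j : Fin d, Fin (n j) => x.1) i,
          ∑ W ∈ colSets (fun x : Σ j : Fin d, Fin (n j) => x.1) (k - i),
          (if Disjoint U W then
            prinMinor (bigM A) (U.map (Equiv.sigmaCongrRight π).toEmbedding) *
              prinMinor (bigM D) W else 0) := by
    intro π
    rw [Finset.sum_comm]
    have h2 : ∀ S : Finset (Σ j : Fin d, Fin (n j)), _ := fun S =>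
      (sign_sum_sigma (fun ε => prinMinor (Matrix.of fun x y => (if ε x then 1 else -1) *
            ((bigM A).submatrix (Equiv.sigmaCongrRight π) (Equiv.sigmaCongrRight π)) x y *
            (if ε y then 1 else -1) + bigM D x y) S)).trans (sign_sum_prinMinor _ _ S)
    rw [Finset.sum_congr rfl fun S _ => h2 S, ← Finset.mul_sum]
    simp_rw [prinMinor_submatrix]
    congr 1
    · simp
    · refine colSets_split (fun x : Σ j : Fin d, Fin (n j) => x.1)
        (fun U => prinMinor (bigM A) (U.map (Equiv.sigmaCongrRight π).toEmbedding))
        (fun U => prinMinor (bigM D) U) (fun U hU => ?_) k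
      obtain ⟨i, hi⟩ := exists_colSets (isCyc_bigM A) hU
      refine ⟨i, ?_⟩
      have h3 := map_mem_colSets (fun j => (π j).symm) hi
      convert h3
      ext ⟨j, x⟩
      simp [Equiv.sigmaCongrRight]
  rw [Finset.sum_congr rfl fun π _ => h1 π, ← Finset.mul_sum, Finset.sum_comm, mul_left_comm]
  congr 1
  rw [Finset.mul_sum]
  refine Finset.sum_congr rfl fun i hi => ?_
  have hik : i ≤ k := Nat.lt_succ_iff.1 (Finset.mem_range.1 hi)
  rw [perm_sum (prinMinor (bigM A)) (prinMinor (bigM D)) k i hk hik, minorSum_cycProd,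
    minorSum_cycProd]
  obtain ⟨l, rfl⟩ := Nat.exists_eq_add_of_le hik
  rw [Nat.add_sub_cancel_left, mul_add, pow_add, pow_add]
  ring
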